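/- Let X be a real random variable with law ν having finite exponential moments, let β be a standard Brownian bridge on [0,1] independent of X, σ > 0, ξ_t = t·X + σβ_t, and Φ_t = ∫ h(x, ξ_t, t, σ) ν(dx). Then for every t ∈ (0,1) and every bounded measurable g : ℝ → ℝ, E[g(ξ_t)/Φ_t] = ∫ g(z) f_{σ²t(1−t)}(z) dz, where f_v(y) = (2πv)^{−1/2} e^{−y²/(2v)}; i.e., under the change of probability measure with density 1/Φ_t, the random variable ξ_t has the centered Gaussian law with variance σ²t(1−t). (The Gaussian law of the information process under the bridge measure, used in the proof of Proposition 3.1.) -/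

import Mathlib

/-!
Given `X = x`, the variable `ξ_t = t x + σ β_t` is `N(t x, v)` with `v = σ² t (1 - t)`, and its
density at `z` factors as `f_v(z) · h(x, z, t, σ)` (`gaussianPDF_eq_hfun`). Since `X` and `β_t` are
independent, integrating out `x` (Tonelli, `map_prod_eq_withDensity`) shows that `ξ_t` has density
`f_v(z) · φ(z)` with `φ(z) = ∫ h(x, z, t, σ) ν(dx)`. As `Φ_t = φ(ξ_t)` and `φ` is finite and
strictly positive, dividing by `Φ_t` cancels `φ` and leaves the density `f_v`.
-/

open MeasureTheory ProbabilityTheory Real Set Filter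
open scoped ENNReal NNReal Classical

noncomputable section

/-- The Gaussian likelihood function `h(x,y,t,σ) = exp((x·y − t·x²/2)/(σ²·(1−t)))`. -/
def hfun (x y t σ : ℝ) : ℝ := Real.exp ((x * y - t * x ^ 2 / 2) / (σ ^ 2 * (1 - t)))

/-- A process is a centered Gaussian process on `[0,1]` with covariance function `c` if every
finite real-linear combination of its values at times in `[0,1]` is a centered Gaussian random
variable with the variance induced by `c`. -/
def IsCenteredGaussianCov {Ω : Type*} [MeasurableSpace Ω] (P : Measure Ω)
    (β : ℝ → Ω → ℝ) (c : ℝ → ℝ → ℝ) : Prop :=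
  ∀ (k : ℕ) (t : Fin k → ℝ), (∀ i, t i ∈ Set.Icc (0:ℝ) 1) → ∀ a : Fin k → ℝ,
    Measure.map (fun ω => ∑ i, a i * β (t i) ω) P
      = gaussianReal 0 (Real.toNNReal (∑ i, ∑ j, a i * a j * c (t i) (t j)))

/-- A standard Brownian bridge on `[0,1]`: a measurable, path-continuous, centered Gaussian
process with covariance `min s t − s·t`. -/
def IsStdBrownianBridge {Ω : Type*} [MeasurableSpace Ω] (P : Measure Ω)
    (β : ℝ → Ω → ℝ) : Prop :=
  (∀ t, Measurable (β t)) ∧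
  (∀ ω, ContinuousOn (fun t => β t ω) (Set.Icc 0 1)) ∧
  IsCenteredGaussianCov P β (fun s t => min s t - s * t)

/-- `ν` has finite exponential moments. -/
def FiniteExpMoments (ν : Measure ℝ) : Prop :=
  ∀ lam : ℝ, 0 < lam → Integrable (fun x => Real.exp (lam * |x|)) ν

/-- The σ-algebra generated by the observations `ξ_s`, `0 ≤ s ≤ t`. -/
def sigmaUpTo {Ω : Type*} [MeasurableSpace Ω] (ξ : ℝ → Ω → ℝ) (t : ℝ) : MeasurableSpace Ω :=
  ⨆ s ∈ Set.Icc (0:ℝ) t, MeasurableSpace.comap (ξ s) inferInstance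


/-- The centered Gaussian density with variance `v`. -/
def gaussDens (v y : ℝ) : ℝ := (Real.sqrt (2 * Real.pi * v))⁻¹ * Real.exp (-(y ^ 2) / (2 * v))

/-- Completing the square
bounds the likelihood, as a function of `x`, by its maximum, attained at `x = z / t`. -/
lemma integrable_hfun (ν : Measure ℝ) [IsProbabilityMeasure ν] {t σ : ℝ} (ht0 : 0 < t)
    (ht1 : t < 1) (hσ : 0 < σ) (z : ℝ) : Integrable (fun x => hfun x z t σ) ν := by
  have hd : 0 < σ ^ 2 * (1 - t) := mul_pos (pow_pos hσ 2) (sub_pos.2 ht1)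
  refine Integrable.of_bound (C := Real.exp ((z ^ 2 / (2 * t)) / (σ ^ 2 * (1 - t)))) ?_ ?_
  · unfold hfun
    exact Measurable.aestronglyMeasurable (by fun_prop)
  · refine ae_of_all _ fun x => ?_
    unfold hfun
    rw [Real.norm_eq_abs, Real.abs_exp, Real.exp_le_exp]
    refine div_le_div_of_nonneg_right ?_ hd.le
    have h : z ^ 2 / (2 * t) - (x * z - t * x ^ 2 / 2) = (z - t * x) ^ 2 / (2 * t) := by
      field_simp
      ring
    have h2 : 0 ≤ (z - t * x) ^ 2 / (2 * t) := by positivity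
    linarith

lemma integral_hfun_pos (ν : Measure ℝ) [IsProbabilityMeasure ν] {t σ : ℝ} (ht0 : 0 < t)
    (ht1 : t < 1) (hσ : 0 < σ) (z : ℝ) : 0 < ∫ x, hfun x z t σ ∂ν :=
  integral_exp_pos (integrable_hfun ν ht0 ht1 hσ z)

/-- The likelihood `h(x, z, t, σ)` is the density ratio of the laws of `t x + σ β_t` and
`σ β_t` at `z`. -/
lemma gaussianPDF_eq_hfun {t σ : ℝ} (ht0 : 0 < t) (ht1 : t < 1) (hσ : 0 < σ) (x z : ℝ) :
    gaussianPDF (t * x) (Real.toNNReal (σ ^ 2 * t * (1 - t))) z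
      = ENNReal.ofReal (gaussDens (σ ^ 2 * t * (1 - t)) z) * ENNReal.ofReal (hfun x z t σ) := by
  have h1 : 0 < 1 - t := sub_pos.2 ht1
  have hv : 0 < σ ^ 2 * t * (1 - t) := by positivity
  have hg : 0 ≤ gaussDens (σ ^ 2 * t * (1 - t)) z := by unfold gaussDens; positivity
  rw [← ENNReal.ofReal_mul hg, gaussianPDF_def, gaussianPDFReal_def]
  simp only [Real.coe_toNNReal _ hv.le, gaussDens, hfun]
  rw [mul_assoc _ (Real.exp _) (Real.exp _), ← Real.exp_add]
  congr 3
  field_simp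
  ring

/-- Density of `t X + Y` for independent `X ~ ν` and `Y ~ N(0, σ² t (1 - t))`. -/
lemma map_prod_eq_withDensity (ν : Measure ℝ) [IsProbabilityMeasure ν] {t σ : ℝ} (ht0 : 0 < t)
    (ht1 : t < 1) (hσ : 0 < σ) :
    (ν.prod (gaussianReal 0 (Real.toNNReal (σ ^ 2 * t * (1 - t))))).map
        (fun p => t * p.1 + p.2)
      = volume.withDensity (fun z => ENNReal.ofReal (gaussDens (σ ^ 2 * t * (1 - t)) z) *
          ENNReal.ofReal (∫ x, hfun x z t σ ∂ν)) := by
  have h1 : 0 < 1 - t := sub_pos.2 ht1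
  have hv : 0 < σ ^ 2 * t * (1 - t) := by positivity
  have hv' : Real.toNNReal (σ ^ 2 * t * (1 - t)) ≠ 0 := (Real.toNNReal_pos.2 hv).ne'
  have hm : Measurable fun p : ℝ × ℝ => t * p.1 + p.2 := by fun_prop
  ext A hA
  rw [Measure.map_apply hm hA, Measure.prod_apply (hm hA), withDensity_apply _ hA]
  have hfib : ∀ x : ℝ, gaussianReal 0 (Real.toNNReal (σ ^ 2 * t * (1 - t)))
      (Prod.mk x ⁻¹' ((fun p : ℝ × ℝ => t * p.1 + p.2) ⁻¹' A))
      = ∫⁻ z in A, ENNReal.ofReal (gaussDens (σ ^ 2 * t * (1 - t)) z) *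
          ENNReal.ofReal (hfun x z t σ) := by
    intro x
    have hmap := gaussianReal_map_const_add (μ := 0)
      (v := Real.toNNReal (σ ^ 2 * t * (1 - t))) (t * x)
    have e : Prod.mk x ⁻¹' ((fun p : ℝ × ℝ => t * p.1 + p.2) ⁻¹' A)
        = (fun y => t * x + y) ⁻¹' A := rfl
    rw [e, ← Measure.map_apply (by fun_prop) hA, hmap, zero_add, gaussianReal_apply _ hv']
    simp_rw [gaussianPDF_eq_hfun ht0 ht1 hσ]
  simp_rw [hfib]
  rw [lintegral_lintegral_swap]
  · refine lintegral_congr fun z => ?_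
    rw [lintegral_const_mul _ (by unfold hfun; fun_prop),
      ofReal_integral_eq_lintegral_ofReal (integrable_hfun ν ht0 ht1 hσ z)
        (ae_of_all _ fun x => (Real.exp_pos _).le)]
  · apply Measurable.aemeasurable
    unfold hfun gaussDens Function.uncurry
    fun_prop

/-- Gaussian law of the information process under the bridge measure, used in
the proof of Proposition 3.1.  Under the change of measure with density `1/Φ_t`, the random
variable `ξ_t` is centered Gaussian with variance `σ²t(1−t)`:
`E[g(ξ_t)/Φ_t] = ∫ g(z) f_{σ²t(1−t)}(z) dz` for bounded measurable `g`. -/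
theorem information_gaussian_under_bridge_measure
    {Ω : Type*} [m0 : MeasurableSpace Ω] (P : Measure Ω) [IsProbabilityMeasure P]
    (X : Ω → ℝ) (hX : Measurable X)
    (ν : Measure ℝ) [IsProbabilityMeasure ν] (hlaw : Measure.map X P = ν)
    (hν : FiniteExpMoments ν)
    (β : ℝ → Ω → ℝ) (hβ : IsStdBrownianBridge P β)
    (hindep : Indep (MeasurableSpace.comap X inferInstance) (sigmaUpTo β 1) P)
    (σ : ℝ) (hσ : 0 < σ)
    (ξ : ℝ → Ω → ℝ) (hξ : ∀ t ω, ξ t ω = t * X ω + σ * β t ω)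
    (Φ : ℝ → Ω → ℝ) (hΦ : ∀ t ω, Φ t ω = ∫ x, hfun x (ξ t ω) t σ ∂ν) :
    ∀ t ∈ Set.Ioo (0:ℝ) 1,
      ∀ g : ℝ → ℝ, Measurable g → ∀ C : ℝ, (∀ z, |g z| ≤ C) →
        ∫ ω, g (ξ t ω) / Φ t ω ∂P = ∫ z, g z * gaussDens (σ ^ 2 * t * (1 - t)) z := by
  rintro t ⟨ht0, ht1⟩ g hg C hC
  have h1 : 0 < 1 - t := sub_pos.2 ht1
  have hβm : Measurable (β t) := hβ.1 t
  have hlawβ : P.map (fun ω => σ * β t ω)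
      = gaussianReal 0 (Real.toNNReal (σ ^ 2 * t * (1 - t))) := by
    have h := hβ.2.2 1 (fun _ => t) (fun _ => ⟨ht0.le, ht1.le⟩) (fun _ => σ)
    simp only [Finset.univ_unique, Finset.sum_const, Finset.card_singleton, one_smul,
      min_self] at h
    rw [h]
    congr 2
    ring
  have hind : IndepFun X (fun ω => σ * β t ω) P := by
    have h0 : IndepFun X (β t) P := by
      rw [IndepFun_iff_Indep]
      refine indep_of_indep_of_le_right hindep ?_
      exact le_iSup₂_of_le (f := fun s (_ : s ∈ Set.Icc (0:ℝ) 1) =>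
        MeasurableSpace.comap (β s) inferInstance) t ⟨ht0.le, ht1.le⟩ le_rfl
    exact h0.comp (φ := id) (ψ := fun y => σ * y) measurable_id (by fun_prop)
  have hξm : Measurable (ξ t) := by
    have : ξ t = fun ω => t * X ω + σ * β t ω := funext (hξ t)
    rw [this]
    fun_prop
  have hlawξ : P.map (ξ t) = volume.withDensity
      (fun z => ENNReal.ofReal (gaussDens (σ ^ 2 * t * (1 - t)) z) *
          ENNReal.ofReal (∫ x, hfun x z t σ ∂ν)) := by
    rw [← map_prod_eq_withDensity ν ht0 ht1 hσ, ← hlawβ, ← hlaw,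
      ← (indepFun_iff_map_prod_eq_prod_map_map hX.aemeasurable
        (by fun_prop)).1 hind, Measure.map_map (by fun_prop) (by fun_prop)]
    congr 1
    exact funext (hξ t)
  have hφm : Measurable fun z => ∫ x, hfun x z t σ ∂ν := by
    have : StronglyMeasurable (Function.uncurry fun z x : ℝ => hfun x z t σ) := by
      apply Measurable.stronglyMeasurable
      unfold hfun Function.uncurry
      fun_prop
    exact this.integral_prod_right.measurable
  have hdm : Measurable fun z => gaussDens (σ ^ 2 * t * (1 - t)) z := by
    unfold gaussDens
    fun_prop
  simp_rw [hΦ]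
  rw [← integral_map (φ := ξ t) (f := fun z => g z / ∫ x, hfun x z t σ ∂ν) hξm.aemeasurable
    (hg.div hφm).aestronglyMeasurable, hlawξ,
    integral_withDensity_eq_integral_toReal_smul (by fun_prop)
      (ae_of_all _ fun z => ENNReal.mul_lt_top ENNReal.ofReal_lt_top ENNReal.ofReal_lt_top)]
  refine integral_congr_ae (ae_of_all _ fun z => ?_)
  have hpos := integral_hfun_pos ν ht0 ht1 hσ z
  have hd : 0 ≤ gaussDens (σ ^ 2 * t * (1 - t)) z := by unfold gaussDens; positivity
  simp only [ENNReal.toReal_mul, ENNReal.toReal_ofReal hd, ENNReal.toReal_ofReal hpos.le,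
    smul_eq_mul]
  field_simp

end
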